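/- arXiv:2604.13147 — 3 statements merged into one kernel-verified Lean document; each statement's English description precedes it below -/
import Mathlib

section
/- For every n ≥ 2, both integrals ∫_0^{T_n} ∂_s K_{H,1}(T_n,s)·(A(T_n) − A(s⁺)) ds and ∫_0^{T_n} ∂_s K_{H,2}(T_n,s)·A(s) ds are well defined (the integrands are Lebesgue integrable on (0,T_n)), and ∫_0^{T_n} ∂_s K_{H,1}(T_n,s)·(A(T_n) − A(s⁺)) ds − ∫_0^{T_n} ∂_s K_{H,2}(T_n,s)·A(s) ds = Σ_{j=2}^{n} ΔA_j·K_{H,1}(T_n,T_{j−1}) + Σ_{j=1}^{n−1} ΔA_j·K_{H,2}(T_n,T_j). -/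
open MeasureTheory

/-- The fractional Brownian kernel `K_{H,1}(t,s) = c_H t^{H−1/2} s^{1/2−H} (t−s)^{H−1/2}`
(with the convention `K_{H,1}(t,0) = 0`, automatic here since `1/2 − H > 0`). -/
noncomputable def fbmK1 (cH H t s : ℝ) : ℝ :=
  cH * t ^ (H - 1 / 2 : ℝ) * s ^ (1 / 2 - H : ℝ) * (t - s) ^ (H - 1 / 2 : ℝ)

/-- The fractional Brownian kernel
`K_{H,2}(t,s) = c_H (1/2−H) s^{1/2−H} ∫_s^t u^{H−3/2} (u−s)^{H−1/2} du`
(with the convention `K_{H,2}(t,t) = 0`, automatic here). -/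
noncomputable def fbmK2 (cH H t s : ℝ) : ℝ :=
  cH * (1 / 2 - H) * s ^ (1 / 2 - H : ℝ) *
    ∫ u in s..t, u ^ (H - 3 / 2 : ℝ) * (u - s) ^ (H - 1 / 2 : ℝ)

open Set intervalIntegral

/-- The fundamental theorem of calculus for continuous monotone functions that are differentiable
in the interior; integrability of the derivative is automatic. -/
theorem intervalIntegrable_deriv_and_integral_of_monotoneOn {f : ℝ → ℝ} {p q : ℝ} (hpq : p ≤ q)
    (hc : ContinuousOn f (Icc p q)) (hd : ∀ x ∈ Ioo p q, DifferentiableAt ℝ f x)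
    (hm : MonotoneOn f (Ioo p q)) :
    IntervalIntegrable (deriv f) volume p q ∧ ∫ x in p..q, deriv f x = f q - f p := by
  have hint : IntervalIntegrable (deriv f) volume p q := by
    rw [intervalIntegrable_iff_integrableOn_Ioc_of_le hpq]
    refine integrableOn_deriv_of_nonneg hc (fun x hx => (hd x hx).hasDerivAt) fun x hx => ?_
    rw [← derivWithin_of_isOpen isOpen_Ioo hx]
    exact hm.derivWithin_nonneg
  exact ⟨hint, integral_eq_sub_of_hasDerivAt_of_le hpq hc
    (fun x hx => (hd x hx).hasDerivAt) hint⟩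

theorem intervalIntegrable_deriv_and_integral_of_antitoneOn {f : ℝ → ℝ} {p q : ℝ} (hpq : p ≤ q)
    (hc : ContinuousOn f (Icc p q)) (hd : ∀ x ∈ Ioo p q, DifferentiableAt ℝ f x)
    (hm : AntitoneOn f (Ioo p q)) :
    IntervalIntegrable (deriv f) volume p q ∧ ∫ x in p..q, deriv f x = f q - f p := by
  obtain ⟨hi, he⟩ := intervalIntegrable_deriv_and_integral_of_monotoneOn hpq hc.neg
    (fun x hx => (hd x hx).neg) hm.neg
  have hderiv : deriv (-f) = fun x => -deriv f x := funext fun x => deriv.neg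
  rw [hderiv] at hi he
  rw [intervalIntegral.integral_neg, Pi.neg_apply, Pi.neg_apply] at he
  exact ⟨by simpa [Pi.neg_def] using hi.neg, by linarith⟩

/-- Integration of a derivative against a step function on a grid. -/
theorem integrableOn_deriv_mul_step {n : ℕ} {T : ℕ → ℝ} (hT : ∀ i < n, T i < T (i + 1))
    {F g : ℝ → ℝ} {b : ℕ → ℝ} (hg : ∀ i < n, ∀ s ∈ Ico (T i) (T (i + 1)), g s = b i)
    (hF : ∀ i < n, b i = 0 ∨ (IntervalIntegrable (deriv F) volume (T i) (T (i + 1)) ∧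
      ∫ s in T i..T (i + 1), deriv F s = F (T (i + 1)) - F (T i))) (h0n : T 0 ≤ T n) :
    IntegrableOn (fun s => deriv F s * g s) (Ioo (T 0) (T n)) ∧
    ∫ s in Ioo (T 0) (T n), deriv F s * g s
      = ∑ i ∈ Finset.range n, b i * (F (T (i + 1)) - F (T i)) := by
  have heq : ∀ i < n, EqOn (fun s => deriv F s * b i) (fun s => deriv F s * g s)
      (uIoo (T i) (T (i + 1))) := by
    intro i hi s hs
    rw [uIoo_of_lt (hT i hi)] at hs
    simp only [hg i hi s ⟨hs.1.le, hs.2⟩]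
  have hint : ∀ i < n, IntervalIntegrable (fun s => deriv F s * g s) volume
      (T i) (T (i + 1)) := by
    intro i hi
    refine IntervalIntegrable.congr_uIoo ?_ (heq i hi)
    rcases hF i hi with h | ⟨h, -⟩
    · simp [h]
    · exact h.mul_const _
  refine ⟨(intervalIntegrable_iff_integrableOn_Ioo_of_le h0n).1
    (IntervalIntegrable.trans_iterate hint), ?_⟩
  rw [← integral_Ioc_eq_integral_Ioo, ← integral_of_le h0n,
    ← sum_integral_adjacent_intervals hint]
  refine Finset.sum_congr rfl fun i hi => ?_
  have hi := Finset.mem_range.1 hi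
  rw [← integral_congr_uIoo (heq i hi)]
  rcases hF i hi with h | ⟨-, h⟩
  · simp [h]
  · rw [intervalIntegral.integral_mul_const, h, mul_comm]

theorem fbmK1_ftc {cH H t p q : ℝ} (hH : H < 1 / 2) (hcH : 0 < cH) (hp : 0 ≤ p) (hpq : p ≤ q)
    (hqt : q < t) :
    IntervalIntegrable (deriv (fun s => fbmK1 cH H t s)) volume p q ∧
      ∫ s in p..q, deriv (fun s => fbmK1 cH H t s) s = fbmK1 cH H t q - fbmK1 cH H t p := by
  have ht : 0 < t := by linarith
  have hC : 0 ≤ cH * t ^ (H - 1 / 2 : ℝ) := by positivity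
  refine intervalIntegrable_deriv_and_integral_of_monotoneOn hpq ?_ ?_ ?_
  · unfold fbmK1
    refine ContinuousOn.mul (continuousOn_const.mul ?_) ?_
    · exact continuousOn_id.rpow_const fun x _ => Or.inr (by linarith)
    · refine (continuousOn_const.sub continuousOn_id).rpow_const fun x hx => Or.inl ?_
      have := hx.2
      change t - x ≠ 0
      linarith
  · intro x hx
    have h1 : x ≠ 0 := by linarith [hx.1]
    have h2 : t - x ≠ 0 := by linarith [hx.2]
    unfold fbmK1
    exact ((differentiableAt_id.rpow_const (Or.inl h1)).const_mul _).mul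
      (((differentiableAt_const t).sub differentiableAt_id).rpow_const (Or.inl h2))
  · intro x hx y hy hxy
    have hx0 : 0 < x := hp.trans_lt hx.1
    have hy0 : 0 < t - y := by linarith [hy.2]
    have h1 : x ^ (1 / 2 - H : ℝ) ≤ y ^ (1 / 2 - H : ℝ) :=
      Real.rpow_le_rpow hx0.le hxy (by linarith)
    have h2 : (t - x) ^ (H - 1 / 2 : ℝ) ≤ (t - y) ^ (H - 1 / 2 : ℝ) :=
      Real.rpow_le_rpow_of_nonpos hy0 (by linarith) (by linarith)
    have h3 : 0 ≤ (t - x) ^ (H - 1 / 2 : ℝ) := Real.rpow_nonneg (by linarith) _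
    have h4 : 0 ≤ y ^ (1 / 2 - H : ℝ) := Real.rpow_nonneg (by linarith) _
    simp only [fbmK1]
    exact mul_le_mul (mul_le_mul_of_nonneg_left h1 hC) h2 h3 (mul_nonneg hC h4)

/-- The integral in `fbmK2` after the substitution `u = s v`, as a function of the ratio `t / s`. -/
noncomputable def fbmRatioIntegral (H x : ℝ) : ℝ :=
  ∫ v in (1 : ℝ)..x, v ^ (H - 3 / 2 : ℝ) * (v - 1) ^ (H - 1 / 2 : ℝ)

theorem fbmK2_eq_ratio (cH : ℝ) {H t s : ℝ} (hs : 0 < s) (hst : s ≤ t) :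
    fbmK2 cH H t s = cH * (1 / 2 - H) * (s ^ (H - 1 / 2 : ℝ) * fbmRatioIntegral H (t / s)) := by
  have hsub := smul_integral_comp_mul_left (a := 1) (b := t / s)
    (fun u => u ^ (H - 3 / 2 : ℝ) * (u - s) ^ (H - 1 / 2 : ℝ)) s
  rw [mul_one, mul_div_cancel₀ t hs.ne'] at hsub
  have h1 : 1 ≤ t / s := (one_le_div hs).2 hst
  have hscale : ∫ v in (1 : ℝ)..t / s, (s * v) ^ (H - 3 / 2 : ℝ) * (s * v - s) ^ (H - 1 / 2 : ℝ)
      = s ^ (2 * H - 2 : ℝ) * fbmRatioIntegral H (t / s) := by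
    rw [fbmRatioIntegral, ← intervalIntegral.integral_const_mul]
    refine integral_congr fun v hv => ?_
    rw [uIcc_of_le h1] at hv
    have hv1 := hv.1
    rw [show s * v - s = s * (v - 1) by ring, Real.mul_rpow hs.le (by linarith),
      Real.mul_rpow hs.le (by linarith),
      show (2 * H - 2 : ℝ) = (H - 3 / 2) + (H - 1 / 2) by ring, Real.rpow_add hs]
    ring
  rw [fbmK2, ← hsub, smul_eq_mul, hscale,
    show (H - 1 / 2 : ℝ) = (1 / 2 - H) + 1 + (2 * H - 2) by ring, Real.rpow_add hs,
    Real.rpow_add hs, Real.rpow_one]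
  ring

theorem fbmRatio_intervalIntegrable {H : ℝ} (hH : 0 < H) {x : ℝ} (hx : 1 ≤ x) :
    IntervalIntegrable (fun v : ℝ => v ^ (H - 3 / 2 : ℝ) * (v - 1) ^ (H - 1 / 2 : ℝ))
      volume 1 x := by
  have h := (intervalIntegrable_rpow' (a := 0) (b := x - 1)
    (show -1 < H - 1 / 2 by linarith)).comp_sub_right 1
  rw [zero_add, sub_add_cancel] at h
  refine h.continuousOn_mul (continuousOn_id.rpow_const fun v hv => Or.inl ?_)
  rw [uIcc_of_le hx] at hv
  exact (zero_lt_one.trans_le hv.1).ne'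

theorem fbmRatioIntegral_continuousOn {H : ℝ} (hH : 0 < H) {X : ℝ} (hX : 1 ≤ X) :
    ContinuousOn (fbmRatioIntegral H) (Icc 1 X) := by
  have h := continuousOn_primitive_interval' (fbmRatio_intervalIntegrable hH hX) left_mem_uIcc
  rwa [uIcc_of_le hX] at h

theorem fbmRatioIntegral_differentiableAt {H : ℝ} (hH : 0 < H) {x : ℝ} (hx : 1 < x) :
    DifferentiableAt ℝ (fbmRatioIntegral H) x := by
  refine (integral_hasDerivAt_right (fbmRatio_intervalIntegrable hH hx.le)
    (Measurable.stronglyMeasurable (by fun_prop)).stronglyMeasurableAtFilter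
    ?_).differentiableAt
  exact (continuousAt_id.rpow_const (Or.inl (zero_lt_one.trans hx).ne')).mul
    ((continuousAt_id.sub continuousAt_const).rpow_const (Or.inl (sub_pos.2 hx).ne'))

theorem fbmRatioIntegral_nonneg {H x : ℝ} (hx : 1 ≤ x) : 0 ≤ fbmRatioIntegral H x :=
  integral_nonneg hx fun v hv => mul_nonneg (Real.rpow_nonneg (by linarith [hv.1]) _)
    (Real.rpow_nonneg (by linarith [hv.1]) _)

theorem fbmRatioIntegral_mono {H : ℝ} (hH : 0 < H) {x y : ℝ} (hx : 1 ≤ x) (hxy : x ≤ y) :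
    fbmRatioIntegral H x ≤ fbmRatioIntegral H y := by
  refine integral_mono_interval le_rfl hx hxy ?_ (fbmRatio_intervalIntegrable hH (hx.trans hxy))
  refine (ae_restrict_iff' measurableSet_Ioc).2 (Filter.Eventually.of_forall fun v hv => ?_)
  exact mul_nonneg (Real.rpow_nonneg (by linarith [hv.1]) _)
    (Real.rpow_nonneg (by linarith [hv.1]) _)

theorem fbmK2_ftc {cH H t p q : ℝ} (hH0 : 0 < H) (hH : H < 1 / 2) (hcH : 0 < cH) (hp : 0 < p)
    (hpq : p ≤ q) (hqt : q ≤ t) :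
    IntervalIntegrable (deriv (fun s => fbmK2 cH H t s)) volume p q ∧
      ∫ s in p..q, deriv (fun s => fbmK2 cH H t s) s = fbmK2 cH H t q - fbmK2 cH H t p := by
  have ht : 0 < t := by linarith
  refine intervalIntegrable_deriv_and_integral_of_antitoneOn hpq ?_ ?_ ?_
  · have hc : ContinuousOn (fun s =>
        cH * (1 / 2 - H) * (s ^ (H - 1 / 2 : ℝ) * fbmRatioIntegral H (t / s))) (Icc p q) := by
      refine continuousOn_const.mul (ContinuousOn.mul ?_ ?_)
      · exact continuousOn_id.rpow_const fun x hx => Or.inl (hp.trans_le hx.1).ne'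
      · refine (fbmRatioIntegral_continuousOn hH0
          ((one_le_div hp).2 (hpq.trans hqt))).comp ?_ ?_
        · exact continuousOn_const.div continuousOn_id fun x hx => (hp.trans_le hx.1).ne'
        · intro x hx
          exact ⟨(one_le_div (hp.trans_le hx.1)).2 (hx.2.trans hqt),
            div_le_div_of_nonneg_left ht.le hp hx.1⟩
    exact hc.congr fun s hs => fbmK2_eq_ratio cH (hp.trans_le hs.1) (hs.2.trans hqt)
  · intro x hx
    have hx0 : 0 < x := hp.trans hx.1
    have hd : DifferentiableAt ℝ (fun s =>
        cH * (1 / 2 - H) * (s ^ (H - 1 / 2 : ℝ) * fbmRatioIntegral H (t / s))) x := by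
      refine DifferentiableAt.const_mul (DifferentiableAt.mul ?_ ?_) _
      · exact differentiableAt_id.rpow_const (Or.inl hx0.ne')
      · exact DifferentiableAt.comp x (fbmRatioIntegral_differentiableAt hH0
          ((one_lt_div hx0).2 (hx.2.trans_le hqt)))
          ((differentiableAt_const t).div differentiableAt_id hx0.ne')
    refine hd.congr_of_eventuallyEq ?_
    filter_upwards [isOpen_Ioo.mem_nhds hx] with s hs
    exact fbmK2_eq_ratio cH (hp.trans hs.1) (hs.2.le.trans hqt)
  · intro x hx y hy hxy
    have hx0 : 0 < x := hp.trans hx.1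
    have hy0 : 0 < y := hp.trans hy.1
    have hy1 : 1 ≤ t / y := (one_le_div hy0).2 (hy.2.le.trans hqt)
    simp only
    rw [fbmK2_eq_ratio cH hx0 (hx.2.le.trans hqt), fbmK2_eq_ratio cH hy0 (hy.2.le.trans hqt)]
    refine mul_le_mul_of_nonneg_left (mul_le_mul ?_ ?_ ?_ ?_)
      (mul_nonneg hcH.le (by linarith))
    · exact Real.rpow_le_rpow_of_nonpos hx0 hxy (by linarith)
    · exact fbmRatioIntegral_mono hH0 hy1 (div_le_div_of_nonneg_left ht.le hx0 hxy)
    · exact fbmRatioIntegral_nonneg hy1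
    · exact Real.rpow_nonneg hx0.le _

theorem sum_range_tail_mul_sub (a F : ℕ → ℝ) (hF : F 0 = 0) (m : ℕ) :
    ∑ i ∈ Finset.range (m + 1), (a (m + 1) - a (i + 1)) * (F (i + 1) - F i)
      = ∑ j ∈ Finset.Icc 2 (m + 1), (a j - a (j - 1)) * F (j - 1) := by
  induction m with
  | zero => simp
  | succ m ih =>
    rw [Finset.sum_Icc_succ_top (by omega), ← ih, Finset.sum_range_succ]
    have h := Finset.sum_range_sub F (m + 1)
    have hsplit : ∑ i ∈ Finset.range (m + 1), (a (m + 1 + 1) - a (i + 1)) * (F (i + 1) - F i)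
        = ∑ i ∈ Finset.range (m + 1), (a (m + 1) - a (i + 1)) * (F (i + 1) - F i)
          + (a (m + 1 + 1) - a (m + 1)) * ∑ i ∈ Finset.range (m + 1), (F (i + 1) - F i) := by
      rw [Finset.mul_sum, ← Finset.sum_add_distrib]
      exact Finset.sum_congr rfl fun i _ => by ring
    rw [hsplit, h, hF, Nat.add_sub_cancel]
    ring

theorem sum_range_mul_sub (a G : ℕ → ℝ) (ha : a 0 = 0) (m : ℕ) :
    ∑ i ∈ Finset.range (m + 1), a i * (G (i + 1) - G i)
      = a m * G (m + 1) - ∑ j ∈ Finset.Icc 1 m, (a j - a (j - 1)) * G j := by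
  induction m with
  | zero => simp [ha]
  | succ m ih =>
    rw [Finset.sum_range_succ, ih, Finset.sum_Icc_succ_top (by omega), Nat.add_sub_cancel]
    ring

/-- Lemma `repWH` of the paper: for the càdlàg step function `A` built on the grid
`0 = T₀ < ... < T_n` with values `a₀ = 0, a₁, ..., a_n`, both integrands are Lebesgue
integrable on `(0,T_n)` and
`∫_0^{T_n} ∂_s K_{H,1}(T_n,s)(A(T_n) − A(s⁺)) ds − ∫_0^{T_n} ∂_s K_{H,2}(T_n,s) A(s) ds
  = Σ_{j=2}^n ΔA_j K_{H,1}(T_n,T_{j−1}) + Σ_{j=1}^{n−1} ΔA_j K_{H,2}(T_n,T_j)`. -/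
theorem stmt_1
    (H cH : ℝ) (hH : H ∈ Set.Ioo (0 : ℝ) (1 / 2)) (hcH : 0 < cH)
    (n : ℕ) (hn : 2 ≤ n)
    (T : ℕ → ℝ) (hT0 : T 0 = 0) (hTmono : ∀ i < n, T i < T (i + 1))
    (a : ℕ → ℝ) (ha0 : a 0 = 0)
    (A : ℝ → ℝ)
    (hA : ∀ j ∈ Finset.Icc 1 n, ∀ s ∈ Set.Ico (T (j - 1)) (T j), A s = a (j - 1))
    (hAT : A (T n) = a n)
    (Aplus : ℝ → ℝ)
    (hAplus : ∀ j ∈ Finset.Icc 1 n, ∀ s ∈ Set.Ico (T (j - 1)) (T j), Aplus s = a j) :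
    IntegrableOn
      (fun s => deriv (fun s' => fbmK1 cH H (T n) s') s * (A (T n) - Aplus s))
      (Set.Ioo 0 (T n)) ∧
    IntegrableOn
      (fun s => deriv (fun s' => fbmK2 cH H (T n) s') s * A s)
      (Set.Ioo 0 (T n)) ∧
    (∫ s in Set.Ioo 0 (T n), deriv (fun s' => fbmK1 cH H (T n) s') s * (A (T n) - Aplus s))
      - (∫ s in Set.Ioo 0 (T n), deriv (fun s' => fbmK2 cH H (T n) s') s * A s)
      = (∑ j ∈ Finset.Icc 2 n, (a j - a (j - 1)) * fbmK1 cH H (T n) (T (j - 1)))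
        + ∑ j ∈ Finset.Icc 1 (n - 1), (a j - a (j - 1)) * fbmK2 cH H (T n) (T j) := by
  obtain ⟨m, rfl⟩ : ∃ m, n = m + 1 := ⟨n - 1, by omega⟩
  have hmono : ∀ i j, i ≤ j → j ≤ m + 1 → T i ≤ T j := by
    intro i j hij
    induction hij with
    | refl => exact fun _ => le_rfl
    | step _ ih => exact fun hj => (ih (by omega)).trans (hTmono _ (by omega)).le
  have h0n := hmono 0 (m + 1) (by omega) le_rfl
  obtain ⟨hI1, hE1⟩ := integrableOn_deriv_mul_step hTmono
    (F := fun s' => fbmK1 cH H (T (m + 1)) s') (g := fun s => A (T (m + 1)) - Aplus s)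
    (b := fun i => a (m + 1) - a (i + 1))
    (fun i hi s hs => by
      rw [hAT, hAplus (i + 1) (Finset.mem_Icc.2 ⟨by omega, by omega⟩) s hs])
    (fun i hi => by
      rcases (Nat.lt_succ_iff.1 hi).eq_or_lt with rfl | him
      · simp
      · refine Or.inr (fbmK1_ftc hH.2 hcH ?_ (hTmono i hi).le ?_)
        · exact hT0 ▸ hmono 0 i (by omega) (by omega)
        · exact (hmono (i + 1) m him (by omega)).trans_lt (hTmono m (by omega))) h0n
  obtain ⟨hI2, hE2⟩ := integrableOn_deriv_mul_step hTmono
    (F := fun s' => fbmK2 cH H (T (m + 1)) s') (g := A) (b := a)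
    (fun i hi s hs => hA (i + 1) (Finset.mem_Icc.2 ⟨by omega, by omega⟩) s hs)
    (fun i hi => by
      rcases Nat.eq_zero_or_pos i with rfl | hi0
      · exact Or.inl ha0
      · refine Or.inr (fbmK2_ftc hH.1 hH.2 hcH ?_ (hTmono i hi).le
          (hmono (i + 1) (m + 1) hi le_rfl))
        exact hT0 ▸ (hTmono 0 (by omega)).trans_le (hmono 1 i hi0 (by omega))) h0n
  rw [hT0] at hI1 hE1 hI2 hE2
  refine ⟨hI1, hI2, ?_⟩
  have hK1 : fbmK1 cH H (T (m + 1)) (T 0) = 0 := by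
    rw [fbmK1, hT0, Real.zero_rpow (by linarith [hH.2])]
    ring
  have hK2 : fbmK2 cH H (T (m + 1)) (T (m + 1)) = 0 := by simp [fbmK2]
  rw [hE1, hE2, sum_range_tail_mul_sub a (fun i => fbmK1 cH H (T (m + 1)) (T i)) hK1 m,
    sum_range_mul_sub a (fun i => fbmK2 cH H (T (m + 1)) (T i)) ha0 m, hK2, Nat.add_sub_cancel]
  ring
end

section
/- Let λ be a probability measure on 𝔸 absolutely continuous with respect to Lebesgue measure, μ_K a probability measure on ℝ supported in K and absolutely continuous with respect to Lebesgue measure, G : 𝔸 × K → (0,∞) measurable with inf G > 0 and ∫ G d(λ ⊗ μ_K) = 1, and set β := G·(λ ⊗ μ_K) and ξ := Z_# β. Let r̄ : ℝ → [0,∞) be measurable with ∫ r̄ dμ_K = 1, let h : 𝔸 → [0,∞) be measurable with ∫ h dλ = 1, and define the mixture m := Z_#( (h(a)·r̄(z))·(λ ⊗ μ_K) ). Then m is absolutely continuous with respect to ξ, and for ξ-almost every x = (x₁,x₂) one has dm/dξ(x) = h(x₂/x₁)·r̄(x₁) / G(x₂/x₁, x₁). -/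
open MeasureTheory

/-- The cone map `Z(a,z) = (z, a·z)` (first coordinate the "increment", second the action
times the increment), as a map `ℝ × ℝ → ℝ × ℝ` on pairs `(a,z)`. -/
def coneMap : ℝ × ℝ → ℝ × ℝ := fun p => (p.2, p.1 * p.2)

/-- The reference training law `ξ = Z_#(G·(λ ⊗ μ_K))` on the cone. -/
noncomputable def coneRefMeas (lam μK : Measure ℝ) (G : ℝ × ℝ → ℝ) : Measure (ℝ × ℝ) :=
  Measure.map coneMap ((lam.prod μK).withDensity fun p => ENNReal.ofReal (G p))

/-- The mixture law `m = Z_#((h(a)·r̄(z))·(λ ⊗ μ_K))` on the cone. -/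
noncomputable def coneMixMeas (lam μK : Measure ℝ) (h rbar : ℝ → ℝ) : Measure (ℝ × ℝ) :=
  Measure.map coneMap
    ((lam.prod μK).withDensity fun p => ENNReal.ofReal (h p.1 * rbar p.2))

/-- A density pulled back along a measurable map pushes forward to the original density. -/
theorem map_withDensity_comp {α β : Type*} [MeasurableSpace α] [MeasurableSpace β]
    (μ : Measure α) {Z : α → β} (hZ : Measurable Z) {f : β → ENNReal} (hf : Measurable f) :
    (μ.withDensity (f ∘ Z)).map Z = (μ.map Z).withDensity f := by
  ext s hs
  rw [Measure.map_apply hZ hs, withDensity_apply _ (hZ hs), withDensity_apply _ hs,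
    setLIntegral_map hs hf hZ]
  rfl

theorem measurable_coneMap : Measurable coneMap := by
  unfold coneMap
  fun_prop

/-- If `G > 0` and the increment is nonzero almost everywhere, the mixture law has the explicit
density `h(x₂/x₁)·r̄(x₁)/G(x₂/x₁,x₁)` with respect to the reference law. -/
theorem coneMixMeas_eq_withDensity (lam μK : Measure ℝ)
    {G : ℝ × ℝ → ℝ} (hG : Measurable G) {h rbar : ℝ → ℝ} (hh : Measurable h)
    (hr : Measurable rbar) (hpos : ∀ᵐ p ∂lam.prod μK, 0 < G p)
    (hne : ∀ᵐ p ∂lam.prod μK, p.2 ≠ 0) :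
    coneMixMeas lam μK h rbar = (coneRefMeas lam μK G).withDensity
      fun x => ENNReal.ofReal (h (x.2 / x.1) * rbar x.1 / G (x.2 / x.1, x.1)) := by
  have hf : Measurable fun x : ℝ × ℝ =>
      ENNReal.ofReal (h (x.2 / x.1) * rbar x.1 / G (x.2 / x.1, x.1)) := by
    fun_prop
  rw [coneMixMeas, coneRefMeas, ← map_withDensity_comp _ measurable_coneMap hf,
    ← withDensity_mul _ hG.ennreal_ofReal (hf.comp measurable_coneMap)]
  congr 1
  refine withDensity_congr_ae ?_
  filter_upwards [hpos, hne] with p hp hz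
  simp only [Pi.mul_apply, Function.comp_apply, coneMap, mul_div_cancel_right₀ _ hz]
  rw [← ENNReal.ofReal_mul hp.le, mul_div_cancel₀ _ hp.ne']

/-- Proposition `completecase1` of the paper (abstract form): with `λ, μ_K` absolutely
continuous probability measures supported in the compact sets `𝔸`, `K`, a disintegration
kernel `G` bounded below on `𝔸 × K` with `∫ G d(λ⊗μ_K) = 1`, and densities `r̄`, `h`
normalized w.r.t. `μ_K`, `λ`, the mixture `m := Z_#((h·r̄)·(λ⊗μ_K))` is absolutely
continuous w.r.t. `ξ := Z_#(G·(λ⊗μ_K))` with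
`dm/dξ(x) = h(x₂/x₁)·r̄(x₁)/G(x₂/x₁,x₁)` for `ξ`-a.e. `x = (x₁,x₂)`. -/
theorem stmt_5
    (𝔸 K : Set ℝ) (h𝔸c : IsCompact 𝔸) (hKc : IsCompact K)
    (lam μK : Measure ℝ) [IsProbabilityMeasure lam] [IsProbabilityMeasure μK]
    (hlamac : lam ≪ volume) (hμKac : μK ≪ volume)
    (hlamsupp : lam 𝔸ᶜ = 0) (hμKsupp : μK Kᶜ = 0)
    (G : ℝ × ℝ → ℝ) (hGmeas : Measurable G) (hGnn : ∀ p, 0 ≤ G p)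
    (g0 : ℝ) (hg0 : 0 < g0) (hGlb : ∀ a ∈ 𝔸, ∀ z ∈ K, g0 ≤ G (a, z))
    (hGint : ∫ p, G p ∂(lam.prod μK) = 1)
    (rbar : ℝ → ℝ) (hrmeas : Measurable rbar) (hrnn : ∀ z, 0 ≤ rbar z)
    (hrint : ∫ z, rbar z ∂μK = 1)
    (h : ℝ → ℝ) (hhmeas : Measurable h) (hhnn : ∀ a, 0 ≤ h a)
    (hhint : ∫ a, h a ∂lam = 1) :
    coneMixMeas lam μK h rbar ≪ coneRefMeas lam μK G ∧
    (coneMixMeas lam μK h rbar).rnDeriv (coneRefMeas lam μK G)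
      =ᵐ[coneRefMeas lam μK G]
        fun x => ENNReal.ofReal (h (x.2 / x.1) * rbar x.1 / G (x.2 / x.1, x.1)) := by
  have hpos : ∀ᵐ p ∂lam.prod μK, 0 < G p := by
    filter_upwards [Measure.quasiMeasurePreserving_fst.ae (mem_ae_iff.mpr hlamsupp),
      Measure.quasiMeasurePreserving_snd.ae (mem_ae_iff.mpr hμKsupp)] with p hp₁ hp₂
    exact hg0.trans_le (hGlb p.1 hp₁ p.2 hp₂)
  have hne : ∀ᵐ p ∂lam.prod μK, p.2 ≠ 0 :=
    Measure.quasiMeasurePreserving_snd.ae (hμKac.ae_le (Measure.ae_ne volume 0))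
  have hGi : Integrable G (lam.prod μK) := by
    by_contra hni
    simp [integral_undef hni] at hGint
  have : IsFiniteMeasure ((lam.prod μK).withDensity fun p => ENNReal.ofReal (G p)) :=
    isFiniteMeasure_withDensity_ofReal hGi.2
  have : IsFiniteMeasure (coneRefMeas lam μK G) := by
    unfold coneRefMeas
    infer_instance
  rw [coneMixMeas_eq_withDensity lam μK hGmeas hhmeas hrmeas hpos hne]
  exact ⟨withDensity_absolutelyContinuous _ _, Measure.rnDeriv_withDensity _ (by fun_prop)⟩
end

section
/- Define backward recursively, for each θ ∈ Θ, V_m^θ := V_m and V_j^θ(o) := inf_{a ∈ 𝔸} ∫_X ∫_{ℝ^q} V_{j+1}^θ( (o,(x,y)) )·r_{j+1}^θ(a,y,o) μ(dy) ν(dx) for j = m−1, ..., 0, and assume each V_j^θ is measurable. Then sup_{o ∈ H_j} |V_j^θ(o)| ≤ B for all j and θ, and for all θ, θ' ∈ Θ and all 0 ≤ j ≤ m, sup_{o ∈ H_j} |V_j^θ(o) − V_j^{θ'}(o)| ≤ (m−j)·B·L·|θ − θ'|. -/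
open MeasureTheory

/-- Averaging a function bounded by `C` against a probability density keeps the bound `C`. -/
theorem abs_integral_mul_density_le {Y : Type*} [MeasurableSpace Y] {μ : Measure Y}
    {f r : Y → ℝ} {C : ℝ} (hf : ∀ y, |f y| ≤ C) (hr : ∀ y, 0 ≤ r y)
    (hr_one : ∫ y, r y ∂μ = 1) : |∫ y, f y * r y ∂μ| ≤ C := by
  have hri : Integrable r μ := .of_integral_ne_zero (by simp [hr_one])
  have hle : ∀ y, ‖f y * r y‖ ≤ C * r y := fun y => by
    rw [norm_mul, Real.norm_of_nonneg (hr y)]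
    exact mul_le_mul_of_nonneg_right (hf y) (hr y)
  calc |∫ y, f y * r y ∂μ| ≤ ∫ y, C * r y ∂μ :=
        norm_integral_le_of_norm_le (hri.const_mul C) (.of_forall hle)
    _ = C := by rw [integral_const_mul, hr_one, mul_one]

/-- Integrals of close bounded functions against two probability densities that are close in
`L¹` are close. -/
theorem abs_integral_mul_density_sub_le {Y : Type*} [MeasurableSpace Y] {μ : Measure Y}
    {f g r s : Y → ℝ} {B D E : ℝ} (hB : 0 ≤ B) (hfm : Measurable f) (hgm : Measurable g)
    (hf : ∀ y, |f y| ≤ B) (hg : ∀ y, |g y| ≤ B) (hfg : ∀ y, |f y - g y| ≤ D)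
    (hr : ∀ y, 0 ≤ r y) (hr_one : ∫ y, r y ∂μ = 1) (hs_one : ∫ y, s y ∂μ = 1)
    (hrs : ∫ y, |r y - s y| ∂μ ≤ E) :
    |∫ y, f y * r y ∂μ - ∫ y, g y * s y ∂μ| ≤ D + B * E := by
  have hri : Integrable r μ := .of_integral_ne_zero (by simp [hr_one])
  have hsi : Integrable s μ := .of_integral_ne_zero (by simp [hs_one])
  have hfr : Integrable (fun y => f y * r y) μ :=
    hri.bdd_mul hfm.aestronglyMeasurable (.of_forall hf)
  have hgr : Integrable (fun y => g y * r y) μ :=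
    hri.bdd_mul hgm.aestronglyMeasurable (.of_forall hg)
  have hgs : Integrable (fun y => g y * s y) μ :=
    hsi.bdd_mul hgm.aestronglyMeasurable (.of_forall hg)
  have hsplit : ∫ y, f y * r y ∂μ - ∫ y, g y * s y ∂μ
      = ∫ y, (f y - g y) * r y ∂μ + ∫ y, g y * (r y - s y) ∂μ := by
    simp only [sub_mul, mul_sub]
    rw [integral_sub hfr hgr, integral_sub hgr hgs]
    ring
  have hsecond : |∫ y, g y * (r y - s y) ∂μ| ≤ B * E :=
    calc |∫ y, g y * (r y - s y) ∂μ| ≤ ∫ y, B * |r y - s y| ∂μ :=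
          norm_integral_le_of_norm_le ((hri.sub hsi).abs.const_mul B) (.of_forall fun y => by
            rw [Real.norm_eq_abs, abs_mul]
            exact mul_le_mul_of_nonneg_right (hg y) (abs_nonneg _))
      _ ≤ B * E := by
          rw [integral_const_mul]
          exact mul_le_mul_of_nonneg_left hrs hB
  rw [hsplit]
  exact (abs_add_le _ _).trans
    (add_le_add (abs_integral_mul_density_le hfg hr hr_one) hsecond)

/-- A pointwise bound on a real function passes to its integral against a probability measure. -/
theorem abs_integral_le_of_forall_abs_le {X : Type*} [MeasurableSpace X] {ν : Measure X}
    [IsProbabilityMeasure ν] {F : X → ℝ} {C : ℝ} (h : ∀ x, |F x| ≤ C) : |∫ x, F x ∂ν| ≤ C := by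
  simpa using norm_integral_le_of_norm_le_const (μ := ν) (f := F) (C := C) (.of_forall h)

/-- A pointwise two-sided bound passes to the infimum. -/
theorem abs_ciInf_le_of_forall_abs_le {ι : Type*} [Nonempty ι] {f : ι → ℝ} {C : ℝ}
    (h : ∀ i, |f i| ≤ C) : |⨅ i, f i| ≤ C := by
  have hbdd : BddBelow (Set.range f) := ⟨-C, by rintro _ ⟨i, rfl⟩; exact (abs_le.1 (h i)).1⟩
  exact abs_le.2 ⟨le_ciInf fun i => (abs_le.1 (h i)).1,
    (ciInf_le hbdd (Classical.arbitrary ι)).trans (abs_le.1 (h _)).2⟩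

/-- Uniformly close functions that are bounded below have close infima. -/
theorem abs_ciInf_sub_ciInf_le {ι : Type*} [Nonempty ι] {f g : ι → ℝ} {C : ℝ}
    (hf : BddBelow (Set.range f)) (hg : BddBelow (Set.range g)) (h : ∀ i, |f i - g i| ≤ C) :
    |(⨅ i, f i) - ⨅ i, g i| ≤ C := by
  have h₁ : (⨅ i, f i) - C ≤ ⨅ i, g i :=
    le_ciInf fun i => by linarith [ciInf_le hf i, (abs_le.1 (h i)).2]
  have h₂ : (⨅ i, g i) - C ≤ ⨅ i, f i :=
    le_ciInf fun i => by linarith [ciInf_le hg i, (abs_le.1 (h i)).1]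
  exact abs_le.2 ⟨by linarith, by linarith⟩

/-- Appending a last entry to a fixed finite sequence is measurable. -/
theorem measurable_finSnoc_const {Z : Type*} [MeasurableSpace Z] {j : ℕ} (o : Fin j → Z) :
    Measurable fun z : Z => (Fin.snoc o z : Fin (j + 1) → Z) := by
  refine measurable_pi_lambda _ fun i => ?_
  induction i using Fin.lastCases with
  | last => simpa using measurable_id'
  | cast i => simp

/-- Proposition `LipvaluePAR` of the paper (abstract form): backward dynamic programming
value functions `V_j^θ` built from parameterized importance-sampling weights `r_{j+1}^θ`
(probability densities w.r.t. `μ`, with `∫|r^θ − r^{θ'}| dμ ≤ L·|θ−θ'|`) from a bounded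
terminal condition `|V_m| ≤ B` satisfy `|V_j^θ| ≤ B` and
`|V_j^θ(o) − V_j^{θ'}(o)| ≤ (m−j)·B·L·|θ−θ'|` for all histories `o` and `θ, θ' ∈ Θ`. -/
theorem stmt_14
    {X : Type*} [MeasurableSpace X] (ν : Measure X) [IsProbabilityMeasure ν]
    {q p : ℕ} (μ : Measure (Fin q → ℝ)) [IsProbabilityMeasure μ]
    {𝔸 : Type*} [MetricSpace 𝔸] [CompactSpace 𝔸] [Nonempty 𝔸]
    (m : ℕ) (Θ : Set (EuclideanSpace ℝ (Fin p))) (hΘ : Θ.Nonempty)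
    (L B : ℝ)
    (rker : EuclideanSpace ℝ (Fin p) → (j : ℕ) → 𝔸 → (Fin q → ℝ) →
      (Fin j → X × (Fin q → ℝ)) → ℝ)
    (hrmeas : ∀ θ ∈ Θ, ∀ (j : ℕ) (a : 𝔸) (o : Fin j → X × (Fin q → ℝ)),
      Measurable fun y => rker θ j a y o)
    (hrcont : ∀ θ ∈ Θ, ∀ (j : ℕ) (y : Fin q → ℝ) (o : Fin j → X × (Fin q → ℝ)),
      Continuous fun a : 𝔸 => rker θ j a y o)
    (hrnn : ∀ θ ∈ Θ, ∀ (j : ℕ) (a : 𝔸) (y : Fin q → ℝ) (o : Fin j → X × (Fin q → ℝ)),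
      0 ≤ rker θ j a y o)
    (hrint : ∀ θ ∈ Θ, ∀ (j : ℕ) (a : 𝔸) (o : Fin j → X × (Fin q → ℝ)),
      ∫ y, rker θ j a y o ∂μ = 1)
    (hrlip : ∀ θ ∈ Θ, ∀ θ' ∈ Θ, ∀ (j : ℕ) (a : 𝔸) (o : Fin j → X × (Fin q → ℝ)),
      ∫ y, |rker θ j a y o - rker θ' j a y o| ∂μ ≤ L * ‖θ - θ'‖)
    (Vm : (Fin m → X × (Fin q → ℝ)) → ℝ) (hVmmeas : Measurable Vm)
    (hVmbd : ∀ o, |Vm o| ≤ B)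
    (V : EuclideanSpace ℝ (Fin p) → (j : ℕ) → (Fin j → X × (Fin q → ℝ)) → ℝ)
    (hVmeas : ∀ θ ∈ Θ, ∀ j : ℕ, Measurable (V θ j))
    (hVtop : ∀ θ ∈ Θ, ∀ o, V θ m o = Vm o)
    (hVrec : ∀ θ ∈ Θ, ∀ j < m, ∀ o : Fin j → X × (Fin q → ℝ),
      V θ j o = ⨅ a : 𝔸, ∫ x, ∫ y, V θ (j + 1) (Fin.snoc o (x, y)) * rker θ j a y o ∂μ ∂ν) :
    (∀ θ ∈ Θ, ∀ j ≤ m, ∀ o : Fin j → X × (Fin q → ℝ), |V θ j o| ≤ B) ∧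
    ∀ θ ∈ Θ, ∀ θ' ∈ Θ, ∀ j ≤ m, ∀ o : Fin j → X × (Fin q → ℝ),
      |V θ j o - V θ' j o| ≤ ((m : ℝ) - j) * B * L * ‖θ - θ'‖ := by
  obtain ⟨x₀⟩ : Nonempty X := nonempty_of_isProbabilityMeasure ν
  have hB : 0 ≤ B := (abs_nonneg _).trans (hVmbd fun _ => (x₀, 0))
  have hbound : ∀ θ ∈ Θ, ∀ j ≤ m, ∀ o : Fin j → X × (Fin q → ℝ), |V θ j o| ≤ B := by
    intro θ hθ j hj
    induction hj using Nat.decreasingInduction with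
    | self => exact fun o => hVtop θ hθ o ▸ hVmbd o
    | of_succ j hj ih =>
      intro o
      rw [hVrec θ hθ j hj o]
      exact abs_ciInf_le_of_forall_abs_le fun a => abs_integral_le_of_forall_abs_le fun x =>
        abs_integral_mul_density_le (fun y => ih _) (fun y => hrnn θ hθ j a y o)
          (hrint θ hθ j a o)
  refine ⟨hbound, fun θ hθ θ' hθ' j hj => ?_⟩
  induction hj using Nat.decreasingInduction with
  | self => simp [hVtop θ hθ, hVtop θ' hθ']
  | of_succ j hj ih =>
    intro o
    have hVsnoc : ∀ η ∈ Θ,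
        Measurable fun z : X × (Fin q → ℝ) => V η (j + 1) (Fin.snoc o z) := fun η hη =>
      (hVmeas η hη (j + 1)).comp (measurable_finSnoc_const o)
    have hinner : ∀ η ∈ Θ, ∀ (a : 𝔸) (x : X),
        |∫ y, V η (j + 1) (Fin.snoc o (x, y)) * rker η j a y o ∂μ| ≤ B := fun η hη a x =>
      abs_integral_mul_density_le (fun y => hbound η hη (j + 1) hj _)
        (fun y => hrnn η hη j a y o) (hrint η hη j a o)
    have hint : ∀ η ∈ Θ, ∀ a : 𝔸,
        Integrable (fun x => ∫ y, V η (j + 1) (Fin.snoc o (x, y)) * rker η j a y o ∂μ) ν :=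
      fun η hη a => .of_bound
        (((hVsnoc η hη).mul
          ((hrmeas η hη j a o).comp measurable_snd)).stronglyMeasurable.integral_prod_right'
          ).aestronglyMeasurable B (.of_forall (hinner η hη a))
    have hbdd : ∀ η ∈ Θ, BddBelow (Set.range fun a : 𝔸 =>
        ∫ x, ∫ y, V η (j + 1) (Fin.snoc o (x, y)) * rker η j a y o ∂μ ∂ν) := by
      rintro η hη
      refine ⟨-B, ?_⟩
      rintro _ ⟨a, rfl⟩
      exact (abs_le.1 (abs_integral_le_of_forall_abs_le (hinner η hη a))).1
    rw [hVrec θ hθ j hj o, hVrec θ' hθ' j hj o]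
    refine abs_ciInf_sub_ciInf_le (hbdd θ hθ) (hbdd θ' hθ') fun a => ?_
    rw [← integral_sub (hint θ hθ a) (hint θ' hθ' a)]
    refine abs_integral_le_of_forall_abs_le fun x => ?_
    refine (abs_integral_mul_density_sub_le hB
      ((hVsnoc θ hθ).comp measurable_prodMk_left) ((hVsnoc θ' hθ').comp measurable_prodMk_left)
      (fun y => hbound θ hθ (j + 1) hj _) (fun y => hbound θ' hθ' (j + 1) hj _)
      (fun y => ih _) (fun y => hrnn θ hθ j a y o) (hrint θ hθ j a o) (hrint θ' hθ' j a o)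
      (hrlip θ hθ θ' hθ' j a o)).trans_eq ?_
    push_cast
    ring
end
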